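/- Let n ≥ 3, let Γ ⊂ O(n) be a finite subgroup acting freely on ℝⁿ\{0}, and let u be a Γ-symmetric minimizer against Γ-symmetric competitors (with Q = 1) on ℝⁿ which is 1-homogeneous, harmonic in {u>0}, with Σ := ∂{u>0}\{0} a smooth embedded hypersurface, u smooth up to Σ from within {u>0} and |∇u| = 1 on Σ. If u is not a linear solution, then at every point of Σ one has 0 < ∂_ν(|∇u|²/2) = −∂²u/∂ν² = H, where ν is the unit normal along Σ pointing out of {u>0}; in particular the outward mean curvature H of Σ is strictly positive everywhere on Σ. -/

import Mathlib

open MeasureTheory Metric Set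
open scoped RealInnerProductSpace

noncomputable section

/-- The Alt–Caffarelli energy `E_Q(u, U) = ∫_U |∇u|² + Q²·1_{u>0}`. -/
def acEnergy {n : ℕ} (Q : ℝ) (u : EuclideanSpace ℝ (Fin n) → ℝ)
    (U : Set (EuclideanSpace ℝ (Fin n))) : ℝ :=
  ∫ x in U, (‖gradient u x‖ ^ 2 + Q ^ 2 * Set.indicator {y | 0 < u y} (fun _ => (1 : ℝ)) x)

/-- `u` is invariant under the group `Γ` of linear isometries. -/
def IsSymmetricUnder {n : ℕ}
    (Γ : Subgroup (EuclideanSpace ℝ (Fin n) ≃ₗᵢ[ℝ] EuclideanSpace ℝ (Fin n)))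
    (u : EuclideanSpace ℝ (Fin n) → ℝ) : Prop :=
  ∀ g ∈ Γ, ∀ x, u (g x) = u x

/-- A nonnegative locally Lipschitz `Γ`-symmetric function `u` is a `Γ`-symmetric minimizer
against `Γ`-symmetric competitors (with `Q = 1`). -/
def IsSymMinimizer {n : ℕ}
    (Γ : Subgroup (EuclideanSpace ℝ (Fin n) ≃ₗᵢ[ℝ] EuclideanSpace ℝ (Fin n)))
    (u : EuclideanSpace ℝ (Fin n) → ℝ) : Prop :=
  (∀ x, 0 ≤ u x) ∧ LocallyLipschitz u ∧ IsSymmetricUnder Γ u ∧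
    ∀ R > 0, ∀ v : EuclideanSpace ℝ (Fin n) → ℝ, (∀ x, 0 ≤ v x) → LocallyLipschitz v →
      IsSymmetricUnder Γ v →
      (∀ x ∉ ball (0 : EuclideanSpace ℝ (Fin n)) R, v x = u x) →
      acEnergy 1 u (ball 0 R) ≤ acEnergy 1 v (ball 0 R)

/-- The Euclidean Laplacian, as the trace of the Hessian. -/
def lap {n : ℕ} (f : EuclideanSpace ℝ (Fin n) → ℝ) (x : EuclideanSpace ℝ (Fin n)) : ℝ :=
  ∑ i : Fin n, fderiv ℝ (fun y => fderiv ℝ f y (EuclideanSpace.single i 1)) x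
    (EuclideanSpace.single i 1)

/-- The free boundary away from the origin: `Σ = ∂{u>0} \ {0}`. -/
def freeBoundary {n : ℕ} (u : EuclideanSpace ℝ (Fin n) → ℝ) :
    Set (EuclideanSpace ℝ (Fin n)) :=
  frontier {x | 0 < u x} \ {0}

/-- The outward unit normal along `Σ`, computed from a smooth extension `Uext` of `u`
across `Σ` (on `Σ` one has `u = 0`, `u > 0` inside, and `|∇Uext| = 1`, so `-∇Uext` is the
unit normal pointing out of `{u > 0}`). -/
def nuVec {n : ℕ} (Uext : EuclideanSpace ℝ (Fin n) → ℝ) (x : EuclideanSpace ℝ (Fin n)) :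
    EuclideanSpace ℝ (Fin n) :=
  -(gradient Uext x)

/-- The outward mean curvature `H = -∂²u/∂ν²` of `Σ`, computed from the smooth extension. -/
def meanCurv {n : ℕ} (Uext : EuclideanSpace ℝ (Fin n) → ℝ) (x : EuclideanSpace ℝ (Fin n)) : ℝ :=
  -(fderiv ℝ (fun y => (⟪gradient Uext y, nuVec Uext x⟫ : ℝ)) x (nuVec Uext x))

/-- One-sided directional derivative `∂_ν f(x)` in the outward normal direction,
taken from within `{u > 0}` (i.e. from the side `t ≤ 0`). -/
def dNu {n : ℕ} (Uext f : EuclideanSpace ℝ (Fin n) → ℝ) (x : EuclideanSpace ℝ (Fin n)) : ℝ :=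
  derivWithin (fun t : ℝ => f (x + t • nuVec Uext x)) (Set.Iic 0) 0

/-!
Since `u` is `1`-homogeneous, `‖∇u‖` is `0`-homogeneous and therefore attains its supremum over the
closed cone. If the supremum is attained at a point `p` of `{u > 0}`, the harmonic function
`⟪∇u, ∇u(p)⟫` has an interior maximum there; by the strong maximum principle and continuation
across the half-space `{⟪·, ∇u(p)⟫ > 0}`, `u` equals `⟪·, ∇u(p)⟫` on it. On the hyperplane bounding
it `∇u = ∇u(p)`, so by `C¹` regularity no phase of `u` touches the hyperplane from the other side
away from the vertex. A phase in the opposite half-space is thus compared with the linear function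
vanishing on the hyperplane: the quotient attains its maximum, so `u` is linear on that half-space
as well and the two gradients along the hyperplane contradict each other. So `u` is a linear
solution.

For a nonlinear `u` the maximum is therefore `1`, attained only on the free boundary. At a free
boundary point `x`, the harmonic function `⟪∇u, ∇u(x)⟫` is strictly smaller than its value at `x`
throughout an interior tangent ball, and Hopf's boundary point lemma says that its outward normal
derivative, which is both `∂_ν(‖∇u‖²/2)` and `-∂²u/∂ν²`, is positive at `x`.
-/

section SecondDerivatives

open Filter Topology InnerProductSpace Laplacian

variable {F : Type*} [NormedAddCommGroup F] [NormedSpace ℝ F]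

section NormedSpace

variable {E : Type*} [NormedAddCommGroup E] [NormedSpace ℝ E]

lemma tendsto_add_smul (x v : E) : Tendsto (fun t : ℝ => x + t • v) (𝓝 0) (𝓝 x) := by
  have hline : Continuous fun t : ℝ => x + t • v := by fun_prop
  simpa using hline.tendsto 0

lemma deriv_deriv_comp_add_smul {f : E → F} {x : E} (hf : ContDiffAt ℝ 2 f x) (v : E) :
    deriv (deriv fun t : ℝ => f (x + t • v)) 0 = fderiv ℝ (fderiv ℝ f) x v v := by
  have hderiv : deriv (fun t : ℝ => f (x + t • v)) =ᶠ[𝓝 0] fun t => fderiv ℝ f (x + t • v) v := by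
    filter_upwards [(tendsto_add_smul x v).eventually (hf.eventually (by simp))] with t ht
    exact (ht.differentiableAt (by simp)).deriv_comp_add_smul
  rw [hderiv.deriv_eq]
  have hf' : DifferentiableAt ℝ (fderiv ℝ f) x :=
    (hf.fderiv_right (m := 1) (by norm_num)).differentiableAt (by simp)
  have hline : HasDerivAt (fun t : ℝ => x + t • v) v 0 := by
    simpa using ((hasDerivAt_id (0 : ℝ)).smul_const v).const_add x
  refine (HasFDerivAt.comp_hasDerivAt_of_eq (0 : ℝ)
    (hf'.hasFDerivAt.clm_apply (hasFDerivAt_const v x)) hline (by simp)).deriv.trans ?_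
  simp

lemma fderiv_fderiv_nonpos_of_isLocalMax {f : E → ℝ} {x : E} (hf : ContDiffAt ℝ 2 f x)
    (hmax : IsLocalMax f x) (v : E) : fderiv ℝ (fderiv ℝ f) x v v ≤ 0 := by
  by_contra! hpos
  set φ : ℝ → ℝ := fun t => f (x + t • v)
  have hφ : deriv (deriv φ) 0 = fderiv ℝ (fderiv ℝ f) x v v := deriv_deriv_comp_add_smul hf v
  have hline := tendsto_add_smul x v
  have hlocalMax : IsLocalMax φ 0 := by
    filter_upwards [hline.eventually hmax] with t ht
    simpa [φ] using ht
  have hcont : ContinuousAt φ 0 := by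
    simpa [ContinuousAt, φ, Function.comp_def] using hf.continuousAt.tendsto.comp hline
  have hlocalMin : IsLocalMin φ 0 :=
    isLocalMin_of_deriv_deriv_pos (hφ ▸ hpos) hlocalMax.deriv_eq_zero hcont
  have hconst : φ =ᶠ[𝓝 0] fun _ => φ 0 := by
    filter_upwards [hlocalMax, hlocalMin] with t hle hge using le_antisymm hle hge
  have hzero : deriv (deriv φ) 0 = 0 := by simp [hconst.deriv.deriv_eq]
  exact hpos.ne' (hφ ▸ hzero)

lemma contDiffAt_fderiv_apply {f : E → F} {x : E} {m k : WithTop ℕ∞} (hf : ContDiffAt ℝ k f x)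
    (hmk : m + 1 ≤ k) (v : E) : ContDiffAt ℝ m (fun y => fderiv ℝ f y v) x :=
  (hf.fderiv_right hmk).clm_apply contDiffAt_const

lemma fderiv_fderiv_fderiv_comm {f : E → F} {x : E} (hf : ContDiffAt ℝ 3 f x) (v w : E) :
    fderiv ℝ (fderiv ℝ (fderiv ℝ f)) x v w w = fderiv ℝ (fderiv ℝ (fderiv ℝ f)) x w w v := by
  have hf' : ContDiffAt ℝ 2 (fderiv ℝ f) x := hf.fderiv_right (by norm_num)
  have hf'' : DifferentiableAt ℝ (fderiv ℝ (fderiv ℝ f)) x :=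
    (hf'.fderiv_right (m := 1) (by norm_num)).differentiableAt (by simp)
  have houter : fderiv ℝ (fderiv ℝ (fderiv ℝ f)) x v w = fderiv ℝ (fderiv ℝ (fderiv ℝ f)) x w v :=
    hf'.isSymmSndFDerivAt (by simp) v w
  have hinner : (fun y => fderiv ℝ (fderiv ℝ f) y v w) =ᶠ[𝓝 x]
      fun y => fderiv ℝ (fderiv ℝ f) y w v := by
    filter_upwards [hf.eventually (by simp)] with y hy
    exact hy.isSymmSndFDerivAt (by rw [minSmoothness_of_isRCLikeNormedField]; norm_num) v w
  have happly (a b : E) : fderiv ℝ (fun y => fderiv ℝ (fderiv ℝ f) y a b) x w =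
      fderiv ℝ (fderiv ℝ (fderiv ℝ f)) x w a b := by
    rw [((hf''.hasFDerivAt.clm_apply (hasFDerivAt_const a x)).clm_apply
      (hasFDerivAt_const b x)).fderiv]
    simp
  rw [houter, ← happly, hinner.fderiv_eq, happly]

end NormedSpace

section InnerProductSpace

variable {E : Type*} [NormedAddCommGroup E] [InnerProductSpace ℝ E] [FiniteDimensional ℝ E]

lemma laplacian_eq_sum_fderiv_fderiv {ι : Type*} [Fintype ι] (b : OrthonormalBasis ι ℝ E)
    (f : E → F) (x : E) : Δ f x = ∑ i, fderiv ℝ (fderiv ℝ f) x (b i) (b i) := by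
  simp [laplacian_eq_iteratedFDeriv_orthonormalBasis f b, iteratedFDeriv_two_apply]

lemma laplacian_nonpos_of_isLocalMax {f : E → ℝ} {x : E} (hf : ContDiffAt ℝ 2 f x)
    (hmax : IsLocalMax f x) : Δ f x ≤ 0 := by
  rw [laplacian_eq_sum_fderiv_fderiv (stdOrthonormalBasis ℝ E)]
  exact Finset.sum_nonpos fun _ _ => fderiv_fderiv_nonpos_of_isLocalMax hf hmax _

lemma laplacian_fderiv_apply {f : E → F} {x : E} (hf : ContDiffAt ℝ 3 f x) (v : E) :
    Δ (fun y => fderiv ℝ f y v) x = fderiv ℝ (Δ f) x v := by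
  set b := stdOrthonormalBasis ℝ E
  have hf' : ContDiffAt ℝ 2 (fderiv ℝ f) x := hf.fderiv_right (by norm_num)
  have hf'' : DifferentiableAt ℝ (fderiv ℝ (fderiv ℝ f)) x :=
    (hf'.fderiv_right (m := 1) (by norm_num)).differentiableAt (by simp)
  have hleft : Δ (fun y => fderiv ℝ f y v) x =
      ∑ i, fderiv ℝ (fderiv ℝ (fderiv ℝ f)) x (b i) (b i) v := by
    change Δ (ContinuousLinearMap.apply ℝ F v ∘ fderiv ℝ f) x = _
    rw [hf'.laplacian_CLM_comp_left, Function.comp_apply,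
      laplacian_eq_iteratedFDeriv_orthonormalBasis _ b, map_sum]
    simp [iteratedFDeriv_two_apply]
  have hsum : Δ f = fun y => ∑ i, fderiv ℝ (fderiv ℝ f) y (b i) (b i) :=
    funext (laplacian_eq_sum_fderiv_fderiv b f)
  have hright : HasFDerivAt (Δ f)
      (∑ i, ((fderiv ℝ (fderiv ℝ (fderiv ℝ f)) x).flip (b i)).flip (b i)) x := by
    rw [hsum]
    refine HasFDerivAt.fun_sum fun i _ => ?_
    refine ((hf''.hasFDerivAt.clm_apply (hasFDerivAt_const (b i) x)).clm_apply
      (hasFDerivAt_const (b i) x)).congr_fderiv ?_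
    ext w
    simp
  rw [hleft, hright.fderiv, sum_apply]
  exact Finset.sum_congr rfl fun i _ => (fderiv_fderiv_fderiv_comm hf v (b i)).symm

lemma harmonicAt_fderiv_apply {f : E → F} {x : E} (hf : ContDiffAt ℝ 3 f x)
    (hharm : HarmonicAt f x) (v : E) : HarmonicAt (fun y => fderiv ℝ f y v) x := by
  refine ⟨contDiffAt_fderiv_apply hf (by norm_num) v, ?_⟩
  filter_upwards [hf.eventually (by simp), hharm.2.eventually_nhds] with y hy hΔ
  rw [laplacian_fderiv_apply hy, EventuallyEq.fderiv_eq hΔ]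
  simp

lemma harmonicAt_inner (e x : E) : HarmonicAt (fun y => ⟪y, e⟫) x := by
  have hfderiv : fderiv ℝ (fun y => ⟪y, e⟫) = fun _ => innerSL ℝ e := by
    funext y
    simpa [real_inner_comm] using (innerSL ℝ e).fderiv (x := y)
  refine ⟨contDiffAt_id.inner ℝ contDiffAt_const, Eventually.of_forall fun y => ?_⟩
  simp [laplacian_eq_sum_fderiv_fderiv (stdOrthonormalBasis ℝ E), hfderiv]

end InnerProductSpace

end SecondDerivatives

section MaximumPrinciple

open Filter Topology InnerProductSpace Laplacian Module

section HopfBarrier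

variable {E : Type*} [NormedAddCommGroup E]

/-- The Gaussian barrier for Hopf's boundary point lemma on a ball centred at `q`: it is radially
decreasing, and strictly subharmonic outside any given ball around `q` once `α` is large. -/
def hopfBarrier (α : ℝ) (q x : E) : ℝ := Real.exp (-(α * ‖x - q‖ ^ 2))

lemma hopfBarrier_pos (α : ℝ) (q x : E) : 0 < hopfBarrier α q x := Real.exp_pos _

lemma hopfBarrier_le_one {α : ℝ} (hα : 0 ≤ α) (q x : E) : hopfBarrier α q x ≤ 1 :=
  Real.exp_le_one_iff.2 (neg_nonpos.2 (by positivity))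

end HopfBarrier

variable {E : Type*} [NormedAddCommGroup E] [InnerProductSpace ℝ E]

lemma contDiff_hopfBarrier (α : ℝ) (q : E) : ContDiff ℝ 2 (hopfBarrier α q) :=
  (contDiff_const.mul ((contDiff_id.sub contDiff_const).norm_sq ℝ)).neg.exp

lemma hasFDerivAt_hopfBarrier (α : ℝ) (q x : E) :
    HasFDerivAt (hopfBarrier α q) ((-2 * α * hopfBarrier α q x) • innerSL ℝ (x - q)) x := by
  refine (((hasFDerivAt_id x).sub_const q).norm_sq.const_mul α).neg.exp.congr_fderiv ?_
  ext v
  simp only [id_eq, Pi.neg_apply, map_sub, ContinuousLinearMap.comp_id, smul_neg, neg_apply,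
    smul_apply, sub_apply, coe_innerSL_apply, nsmul_eq_mul, Nat.cast_ofNat, smul_eq_mul, neg_mul,
    hopfBarrier, neg_smul, neg_inj]
  ring

lemma fderiv_fderiv_hopfBarrier (α : ℝ) (q x v : E) :
    fderiv ℝ (fderiv ℝ (hopfBarrier α q)) x v v =
      hopfBarrier α q x * (4 * α ^ 2 * ⟪x - q, v⟫ ^ 2 - 2 * α * ‖v‖ ^ 2) := by
  have hfderiv : fderiv ℝ (hopfBarrier α q) =
      fun y => (-2 * α * hopfBarrier α q y) • innerSL ℝ (y - q) :=
    funext fun y => (hasFDerivAt_hopfBarrier α q y).fderiv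
  have hinner : HasFDerivAt (fun y => innerSL ℝ (y - q)) (innerSL ℝ : E →L[ℝ] E →L[ℝ] ℝ) x :=
    (innerSL ℝ).hasFDerivAt.comp x ((hasFDerivAt_id x).sub_const q)
  rw [hfderiv, (((hasFDerivAt_hopfBarrier α q x).const_mul (-2 * α)).fun_smul hinner).fderiv]
  have hself : (innerSL ℝ : E →L[ℝ] E →L[ℝ] ℝ) v v = ‖v‖ ^ 2 := real_inner_self_eq_norm_sq v
  simp only [add_apply, smul_apply, ContinuousLinearMap.smulRight_apply, innerSL_apply_apply,
    hself, smul_eq_mul]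
  ring

variable [FiniteDimensional ℝ E]

lemma laplacian_hopfBarrier (α : ℝ) (q x : E) :
    Δ (hopfBarrier α q) x =
      hopfBarrier α q x * (4 * α ^ 2 * ‖x - q‖ ^ 2 - 2 * α * finrank ℝ E) := by
  set b := stdOrthonormalBasis ℝ E
  rw [laplacian_eq_sum_fderiv_fderiv b, ← b.sum_sq_inner_left (x - q)]
  simp only [fderiv_fderiv_hopfBarrier, b.norm_eq_one, ← Finset.mul_sum, Finset.sum_sub_distrib]
  simp [mul_comm]

lemma exists_isMaxOn_diff_of_laplacian_pos {F : E → ℝ} {K A : Set E} (hK : IsCompact K)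
    (hK₀ : K.Nonempty) (hA : IsOpen A) (hAK : A ⊆ K) (hcont : ContinuousOn F K)
    (hF : ∀ z ∈ A, ContDiffAt ℝ 2 F z) (hΔ : ∀ z ∈ A, 0 < Δ F z) :
    ∃ z ∈ K \ A, IsMaxOn F K z := by
  obtain ⟨z, hz, hmax⟩ := hK.exists_isMaxOn hK₀ hcont
  refine ⟨z, ⟨hz, fun hzA => (hΔ z hzA).not_ge ?_⟩, hmax⟩
  exact laplacian_nonpos_of_isLocalMax (hF z hzA)
    (hmax.isLocalMax (mem_of_superset (hA.mem_nhds hzA) hAK))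

lemma laplacian_add_hopfBarrier_pos {f : E → ℝ} {q z : E} {α ε ρ : ℝ} (hρ : 0 < ρ) (hε : 0 < ε)
    (hα : 2 * finrank ℝ E < α * ρ ^ 2) (hz : ρ / 2 < ‖z - q‖) (hf : ContDiffAt ℝ 2 f z)
    (hΔ : 0 ≤ Δ f z) : 0 < Δ (f + ε • hopfBarrier α q) z := by
  have hα₀ : 0 < α := pos_of_mul_pos_left ((by positivity : (0 : ℝ) ≤ _).trans_lt hα) (sq_nonneg ρ)
  have hρz : ρ ^ 2 < 4 * ‖z - q‖ ^ 2 := by nlinarith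
  have hbracket : 0 < α * (4 * (α * ‖z - q‖ ^ 2) - 2 * finrank ℝ E) :=
    mul_pos hα₀ (by nlinarith)
  have hb : ContDiffAt ℝ 2 (hopfBarrier α q) z := (contDiff_hopfBarrier α q).contDiffAt
  have hεb : ContDiffAt ℝ 2 (ε • hopfBarrier α q) z := contDiffAt_const.smul hb
  rw [hf.laplacian_add hεb, laplacian_smul ε hb, laplacian_hopfBarrier,
    smul_eq_mul]
  have := mul_pos hε (mul_pos (hopfBarrier_pos α q z) hbracket)
  linarith

lemma isMaxOn_add_hopfBarrier {f : E → ℝ} {q y : E} {α ε ρ : ℝ} (hρ : 0 < ρ) (hε : 0 < ε)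
    (hα : 2 * finrank ℝ E < α * ρ ^ 2) (hf : ∀ z ∈ ball q ρ, ContDiffAt ℝ 2 f z)
    (hΔ : ∀ z ∈ ball q ρ, 0 ≤ Δ f z) (hcont : ContinuousOn f (closedBall q ρ))
    (hy : ‖y - q‖ = ρ) (hsphere : ∀ z ∈ closedBall q ρ, f z ≤ f y)
    (hinner : ∀ z ∈ closedBall q (ρ / 2), f z + ε ≤ f y) :
    IsMaxOn (f + ε • hopfBarrier α q) (closedBall q ρ) y := by
  have hα₀ : 0 < α := pos_of_mul_pos_left ((by positivity : (0 : ℝ) ≤ _).trans_lt hα) (sq_nonneg ρ)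
  have hnorm {z : E} (hz : z ∈ ball q ρ \ closedBall q (ρ / 2)) : ρ / 2 < ‖z - q‖ := by
    simpa [dist_eq_norm] using hz.2
  obtain ⟨w, ⟨hw, hwA⟩, hmax⟩ := exists_isMaxOn_diff_of_laplacian_pos
    (F := f + ε • hopfBarrier α q) (isCompact_closedBall q ρ) ⟨q, mem_closedBall_self hρ.le⟩
    (isOpen_ball.sdiff isClosed_closedBall) (sdiff_subset.trans ball_subset_closedBall)
    (hcont.add (continuousOn_const.smul (contDiff_hopfBarrier α q).continuous.continuousOn))
    (fun z hz => (hf z hz.1).add (contDiffAt_const.smul (contDiff_hopfBarrier α q).contDiffAt))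
    (fun z hz => laplacian_add_hopfBarrier_pos hρ hε hα (hnorm hz) (hf z hz.1) (hΔ z hz.1))
  refine isMaxOn_iff.2 fun z hz => (isMaxOn_iff.1 hmax z hz).trans ?_
  simp only [Pi.add_apply, Pi.smul_apply, smul_eq_mul]
  by_cases hwball : w ∈ ball q ρ
  · have hwin : w ∈ closedBall q (ρ / 2) := by_contra fun h => hwA ⟨hwball, h⟩
    have hle := hinner w hwin
    have hone := hopfBarrier_le_one hα₀.le q w
    have hpos := hopfBarrier_pos α q y
    nlinarith
  · have hwρ : ‖w - q‖ = ‖y - q‖ := by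
      rw [hy, ← dist_eq_norm]
      exact le_antisymm hw (not_lt.1 hwball)
    simpa [hopfBarrier, hwρ] using hsphere w hw

theorem fderiv_pos_of_laplacian_nonneg_of_lt {f : E → ℝ} {q y : E}
    (hf : ∀ z ∈ ball q ‖y - q‖, ContDiffAt ℝ 2 f z) (hΔ : ∀ z ∈ ball q ‖y - q‖, 0 ≤ Δ f z)
    (hcont : ContinuousOn f (closedBall q ‖y - q‖)) (hdiff : DifferentiableAt ℝ f y)
    (hyq : y ≠ q) (hlt : ∀ z ∈ ball q ‖y - q‖, f z < f y) : 0 < fderiv ℝ f y (y - q) := by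
  have hρ : 0 < ‖y - q‖ := norm_pos_iff.2 (sub_ne_zero.2 hyq)
  have hy : y ∈ closedBall q ‖y - q‖ := by simp [dist_eq_norm]
  have hle : ∀ z ∈ closedBall q ‖y - q‖, f z ≤ f y := fun z hz =>
    ContinuousWithinAt.closure_le (by rwa [closure_ball q hρ.ne'])
      ((hcont z hz).mono ball_subset_closedBall) continuousWithinAt_const fun w hw => (hlt w hw).le
  have hhalf : closedBall q (‖y - q‖ / 2) ⊆ ball q ‖y - q‖ :=
    closedBall_subset_ball (by linarith)
  obtain ⟨m, hm, hmmax⟩ := (isCompact_closedBall q (‖y - q‖ / 2)).exists_isMaxOn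
    ⟨q, mem_closedBall_self (by positivity)⟩ (hcont.mono (hhalf.trans ball_subset_closedBall))
  have hε : 0 < f y - f m := sub_pos.2 (hlt m (hhalf hm))
  obtain ⟨α, hα⟩ : ∃ α : ℝ, 2 * finrank ℝ E < α * ‖y - q‖ ^ 2 :=
    ⟨(2 * finrank ℝ E + 1) / ‖y - q‖ ^ 2, by field_simp; linarith⟩
  have hα₀ : 0 < α :=
    pos_of_mul_pos_left ((by positivity : (0 : ℝ) ≤ _).trans_lt hα) (sq_nonneg ‖y - q‖)
  have hmax := isMaxOn_add_hopfBarrier hρ hε hα hf hΔ hcont rfl hle fun z hz => by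
    have : f z ≤ f m := hmmax hz
    linarith
  have hderiv := hmax.localize.hasFDerivWithinAt_nonpos
    (hdiff.hasFDerivAt.add ((hasFDerivAt_hopfBarrier α q y).const_smul _)).hasFDerivWithinAt
    (sub_mem_posTangentConeAt_of_segment_subset
      ((convex_closedBall q _).segment_subset hy (mem_closedBall_self hρ.le)))
  rw [← neg_sub y q] at hderiv
  simp only [map_neg, add_apply, smul_apply, innerSL_apply_apply, real_inner_self_eq_norm_sq,
    smul_eq_mul] at hderiv
  have hbarrier : 0 < (f y - f m) * (α * hopfBarrier α q y * ‖y - q‖ ^ 2) :=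
    mul_pos hε (mul_pos (mul_pos hα₀ (hopfBarrier_pos α q y)) (by positivity))
  linarith

theorem isOpen_setOf_eq_of_laplacian_nonneg {f : E → ℝ} {Ω : Set E} {M : ℝ} (hΩ : IsOpen Ω)
    (hf : ∀ z ∈ Ω, ContDiffAt ℝ 2 f z) (hΔ : ∀ z ∈ Ω, 0 ≤ Δ f z) (hle : ∀ z ∈ Ω, f z ≤ M) :
    IsOpen {z ∈ Ω | f z = M} := by
  rw [Metric.isOpen_iff]
  rintro p ⟨hp, hpM⟩
  obtain ⟨r, hr, hrΩ⟩ := Metric.isOpen_iff.1 hΩ p hp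
  refine ⟨r / 2, half_pos hr, fun q hq => ⟨hrΩ (ball_subset_ball (by linarith) hq), ?_⟩⟩
  by_contra hne
  have hsub : closedBall q (dist q p) ⊆ Ω := by
    refine (closedBall_subset_ball' ?_).trans hrΩ
    have : dist q p < r / 2 := hq
    linarith
  have hcont : ContinuousOn f (closedBall q (dist q p)) := fun z hz =>
    (hf z (hsub hz)).continuousAt.continuousWithinAt
  obtain ⟨y, ⟨hy, hyM⟩, hnearest⟩ := ((isCompact_closedBall q (dist q p)).of_isClosed_subset
    (hcont.preimage_isClosed_of_isClosed isClosed_closedBall (isClosed_singleton (x := M)))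
    inter_subset_left).exists_isMinOn ⟨p, by simp [dist_comm], hpM⟩
    (f := fun z => dist z q) (by fun_prop)
  have hball : closedBall q ‖y - q‖ ⊆ closedBall q (dist q p) :=
    closedBall_subset_closedBall (by rwa [← dist_eq_norm])
  have hmax : IsLocalMax f y := by
    filter_upwards [hΩ.mem_nhds (hsub hy)] with z hz using (hle z hz).trans_eq hyM.symm
  have hlt : ∀ z ∈ ball q ‖y - q‖, f z < f y := by
    intro z hz
    have hz' := hball (ball_subset_closedBall hz)
    refine ((hle z (hsub hz')).trans_eq hyM.symm).lt_of_ne fun h => ?_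
    have hdist : dist y q ≤ dist z q := hnearest ⟨hz', h.trans hyM⟩
    exact (mem_ball.1 hz).not_ge (dist_eq_norm y q ▸ hdist)
  have hhopf := fderiv_pos_of_laplacian_nonneg_of_lt
    (fun z hz => hf z (hsub (hball (ball_subset_closedBall hz))))
    (fun z hz => hΔ z (hsub (hball (ball_subset_closedBall hz))))
    (hcont.mono hball) ((hf y (hsub hy)).differentiableAt (by simp))
    (fun h => hne (h ▸ hyM)) hlt
  simp [hmax.fderiv_eq_zero] at hhopf

end MaximumPrinciple

section HalfSpace

open InnerProductSpace Laplacian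

variable {E : Type*} [NormedAddCommGroup E] [InnerProductSpace ℝ E]

lemma isPreconnected_setOf_inner_pos (e : E) : IsPreconnected {y : E | 0 < ⟪y, e⟫} := by
  have := convex_halfSpace_gt (𝕜 := ℝ) (f := fun y : E => ⟪y, e⟫)
    ⟨fun x y => inner_add_left x y e, fun c x => by simp [inner_smul_left]⟩ 0
  exact this.isPreconnected

lemma exists_ne_zero_inner_eq_zero [FiniteDimensional ℝ E] (hE : 1 < Module.finrank ℝ E) (e : E) :
    ∃ z : E, z ≠ 0 ∧ ⟪z, e⟫ = 0 := by
  obtain ⟨z, hz, hz₀⟩ := Submodule.exists_mem_ne_zero_of_ne_bot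
    (LinearMap.ker_ne_bot_of_finrank_lt (f := (innerSL ℝ e).toLinearMap) (by simpa using hE))
  exact ⟨z, hz₀, (real_inner_comm e z).trans hz⟩

theorem eqOn_setOf_pos_of_laplacian_nonneg [FiniteDimensional ℝ E] {u ℓ f : E → ℝ} {c : ℝ} {p : E}
    (hu : Continuous u) (hℓ : Continuous ℓ) (hconn : IsPreconnected {y | 0 < ℓ y})
    (hf : ∀ z, 0 < u z → 0 < ℓ z → ContDiffAt ℝ 2 f z)
    (hΔ : ∀ z, 0 < u z → 0 < ℓ z → 0 ≤ Δ f z)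
    (hle : ∀ z, 0 < u z → 0 < ℓ z → f z ≤ c)
    (heq : ∀ z, 0 < u z → 0 < ℓ z → f z = c → u z = ℓ z)
    (hup : 0 < u p) (hℓp : 0 < ℓ p) (hfp : f p = c) : EqOn u ℓ {y | 0 < ℓ y} := by
  set Ω : Set E := {z | 0 < u z ∧ 0 < ℓ z}
  have hΩ : IsOpen Ω := (isOpen_lt continuous_const hu).inter (isOpen_lt continuous_const hℓ)
  have hopen : IsOpen {z ∈ Ω | f z = c} := isOpen_setOf_eq_of_laplacian_nonneg hΩ
    (fun z hz => hf z hz.1 hz.2) (fun z hz => hΔ z hz.1 hz.2) (fun z hz => hle z hz.1 hz.2)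
  have hclosure : closure {z ∈ Ω | f z = c} ⊆ {z | u z = ℓ z} :=
    closure_minimal (fun z hz => heq z hz.1.1 hz.1.2 hz.2) (isClosed_eq hu hℓ)
  have hsub : {y | 0 < ℓ y} ⊆ {z ∈ Ω | f z = c} := by
    refine hconn.subset_of_closure_inter_subset hopen ⟨p, hℓp, ⟨hup, hℓp⟩, hfp⟩ ?_
    rintro z ⟨hz, hℓz⟩
    have huz : 0 < u z := (hclosure hz).symm ▸ hℓz
    refine ⟨⟨huz, hℓz⟩, ?_⟩
    have hcont : ContinuousWithinAt f {z ∈ Ω | f z = c} z :=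
      (hf z huz hℓz).continuousAt.continuousWithinAt
    exact closure_minimal (t := {c}) (image_subset_iff.2 fun w hw => hw.2) isClosed_singleton
      (hcont.mem_closure_image hz)
  exact fun y hy => hclosure (subset_closure (hsub hy))

end HalfSpace

section LocalExpansion

open Filter Topology Asymptotics InnerProductSpace Gradient

section NormedSpace

variable {E : Type*} [NormedAddCommGroup E] [NormedSpace ℝ E]

lemma eventually_lt_of_fderiv_pos {f : E → ℝ} {f' : E →L[ℝ] ℝ} {x v : E}
    (hf : HasStrictFDerivAt f f' x) (hv : 0 < f' v) :
    ∀ᶠ q : E × E in 𝓝 (x, x), ∀ t > (0 : ℝ), q.1 - q.2 = t • v → f q.2 < f q.1 := by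
  have hv₀ : 0 < ‖v‖ := norm_pos_iff.2 (by rintro rfl; simp at hv)
  have hc : 0 < f' v / (2 * ‖v‖) := by positivity
  filter_upwards [hf.isLittleO.def hc] with q hq t ht hqv
  rw [hqv, norm_smul, Real.norm_of_nonneg ht.le, map_smul, smul_eq_mul,
    show f' v / (2 * ‖v‖) * (t * ‖v‖) = t * f' v / 2 by field_simp] at hq
  have := (abs_le.1 hq).1
  have := mul_pos ht hv
  linarith

lemma isBigO_sub_sub_fderiv {F : Type*} [NormedAddCommGroup F] [NormedSpace ℝ F] {f : E → F}
    {x : E} (hf : ContDiffAt ℝ 2 f x) :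
    (fun y => f y - f x - fderiv ℝ f x (y - x)) =O[𝓝 x] fun y => ‖y - x‖ ^ 2 := by
  have hf' : DifferentiableAt ℝ (fderiv ℝ f) x :=
    (hf.fderiv_right (m := 1) (by norm_num)).differentiableAt (by simp)
  obtain ⟨C, hC₀, hC⟩ := hf'.isBigO_sub.exists_nonneg
  obtain ⟨r, hr, hball⟩ := Metric.eventually_nhds_iff_ball.1
    (hC.bound.and (hf.eventually (by simp)))
  refine IsBigO.of_bound C ?_
  filter_upwards [ball_mem_nhds x hr] with y hy
  have hseg : segment ℝ x y ⊆ ball x r :=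
    (convex_ball x r).segment_subset (mem_ball_self hr) hy
  rw [Real.norm_of_nonneg (sq_nonneg ‖y - x‖), pow_two, ← mul_assoc]
  refine (convex_segment x y).norm_image_sub_le_of_norm_hasFDerivWithin_le'
    (fun z hz => ((hball z (hseg hz)).2.differentiableAt (by simp)).hasFDerivAt.hasFDerivWithinAt)
    (fun z hz => ?_) (left_mem_segment ℝ x y) (right_mem_segment ℝ x y)
  refine (hball z (hseg hz)).1.trans (mul_le_mul_of_nonneg_left ?_ hC₀)
  simpa [← dist_eq_norm, dist_comm] using segment_subset_closedBall_left x y hz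

lemma eventually_closedBall_add_smul_subset {V : Set E} {x : E} (hV : V ∈ 𝓝 x) (v : E) :
    ∀ᶠ ρ : ℝ in 𝓝[>] 0, closedBall (x + ρ • v) (ρ * ‖v‖) ⊆ V := by
  obtain ⟨r, hr, hrV⟩ := Metric.mem_nhds_iff.1 hV
  have hlim : Tendsto (fun ρ : ℝ => 2 * (ρ * ‖v‖)) (𝓝[>] 0) (𝓝 0) :=
    tendsto_nhdsWithin_of_tendsto_nhds (Continuous.tendsto' (by fun_prop) _ _ (by simp))
  filter_upwards [self_mem_nhdsWithin, hlim.eventually (gt_mem_nhds hr)] with ρ hρ hρr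
  refine (closedBall_subset_ball' ?_).trans hrV
  rw [dist_self_add_left, norm_smul, Real.norm_of_nonneg (le_of_lt hρ)]
  linarith

end NormedSpace

section InnerProductSpace

variable {E : Type*} [NormedAddCommGroup E] [InnerProductSpace ℝ E]

lemma deriv_norm_sq_comp_add_smul {G : E → E} {x : E} (hG : DifferentiableAt ℝ G x) (v : E) :
    deriv (fun t : ℝ => ‖G (x + t • v)‖ ^ 2 / 2) 0 = fderiv ℝ (fun y => ⟪G y, G x⟫) x v := by
  have hline : HasDerivAt (fun t : ℝ => x + t • v) v 0 := by
    simpa using ((hasDerivAt_id (0 : ℝ)).smul_const v).const_add x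
  have hcomp : HasDerivAt (fun t : ℝ => G (x + t • v)) (fderiv ℝ G x v) 0 :=
    HasFDerivAt.comp_hasDerivAt_of_eq (0 : ℝ) hG.hasFDerivAt hline (by simp)
  rw [(hcomp.norm_sq.div_const 2).deriv,
    (hG.hasFDerivAt.inner ℝ (hasFDerivAt_const (G x) x)).fderiv]
  simp [real_inner_comm]

variable [CompleteSpace E]

lemma contDiffAt_gradient {f : E → ℝ} {x : E} {m k : WithTop ℕ∞} (hf : ContDiffAt ℝ k f x)
    (hmk : m + 1 ≤ k) : ContDiffAt ℝ m (∇ f) x := by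
  have hdual : ContDiff ℝ m ((toDual ℝ E).symm : StrongDual ℝ E ≃ₗᵢ[ℝ] E) :=
    LinearIsometryEquiv.contDiff _
  exact hdual.contDiffAt.comp x (hf.fderiv_right hmk)

lemma eventually_pos_on_tangent_ball {f : E → ℝ} {x : E} (hf : ContDiffAt ℝ 2 f x) (hx : f x = 0) :
    ∀ᶠ ρ : ℝ in 𝓝[>] 0, ∀ y ∈ ball (x + ρ • ∇ f x) (ρ * ‖∇ f x‖), 0 < f y := by
  obtain ⟨C, hC₀, hC⟩ := (isBigO_sub_sub_fderiv hf).exists_pos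
  have hsmall : ∀ᶠ ρ : ℝ in 𝓝[>] 0, ρ * (2 * C) < 1 := by
    refine nhdsWithin_le_nhds (Continuous.tendsto' (by fun_prop) _ 0 (by simp) |>.eventually
      (gt_mem_nhds one_pos))
  filter_upwards [self_mem_nhdsWithin, hsmall,
    eventually_closedBall_add_smul_subset hC.bound (∇ f x)] with ρ (hρ : 0 < ρ) hρC hsub y hy
  have htaylor := hsub (ball_subset_closedBall hy)
  simp only [mem_ofPred_eq, hx, sub_zero, norm_pow, ← inner_gradient_left,
    Real.norm_eq_abs, abs_norm] at htaylor
  have hball : ‖y - x‖ ^ 2 < 2 * ρ * ⟪∇ f x, y - x⟫ := by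
    have hsq : ‖(y - x) - ρ • ∇ f x‖ ^ 2 < (ρ * ‖∇ f x‖) ^ 2 := by
      rw [mem_ball, dist_eq_norm, ← sub_sub] at hy
      gcongr
    rw [norm_sub_sq_real, inner_smul_right, norm_smul, Real.norm_of_nonneg hρ.le,
      real_inner_comm] at hsq
    linarith
  have hinner : 0 < ⟪∇ f x, y - x⟫ := by
    by_contra! h
    nlinarith [sq_nonneg ‖y - x‖]
  calc 0 < (1 - ρ * (2 * C)) * ⟪∇ f x, y - x⟫ := mul_pos (sub_pos.2 hρC) hinner
    _ = ⟪∇ f x, y - x⟫ - C * (2 * ρ * ⟪∇ f x, y - x⟫) := by ring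
    _ ≤ ⟪∇ f x, y - x⟫ - C * ‖y - x‖ ^ 2 := by gcongr
    _ ≤ f y := by linarith [(abs_le.1 htaylor).1]

end InnerProductSpace

end LocalExpansion

section Homogeneous

lemma apply_zero_of_apply_smul {E : Type*} [Zero E] [SMulZeroClass ℝ E] {u : E → ℝ}
    (hu : ∀ t : ℝ, 0 < t → ∀ x, u (t • x) = t * u x) : u 0 = 0 := by
  have := hu 2 two_pos 0
  rw [smul_zero] at this
  linarith

lemma exists_isMaxOn_of_cone {E : Type*} [NormedAddCommGroup E] [NormedSpace ℝ E]
    [FiniteDimensional ℝ E] {D : Set E} {q : E → ℝ} (hD : D.Nonempty) (h0 : 0 ∉ D)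
    (hcone : ∀ t : ℝ, 0 < t → ∀ y ∈ D, t • y ∈ D)
    (hq : ∀ t : ℝ, 0 < t → ∀ y ∈ D, q (t • y) = q y) (hcont : ContinuousOn q (closure D \ {0})) :
    ∃ p ∈ closure D \ {0}, IsMaxOn q D p := by
  have hnormalize {y : E} (hy : y ∈ D) : 0 < ‖y‖⁻¹ ∧ ‖y‖⁻¹ • y ∈ closure D ∩ sphere 0 1 := by
    have hy₀ : y ≠ 0 := ne_of_mem_of_not_mem hy h0
    have hpos : 0 < ‖y‖⁻¹ := inv_pos.2 (norm_pos_iff.2 hy₀)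
    exact ⟨hpos, subset_closure (hcone _ hpos y hy), by simp [norm_smul, hy₀]⟩
  obtain ⟨y₀, hy₀⟩ := hD
  have hsub : closure D ∩ sphere 0 1 ⊆ closure D \ {0} := fun y hy =>
    ⟨hy.1, ne_of_mem_sphere hy.2 one_ne_zero⟩
  obtain ⟨p, hp, hmax⟩ := ((isCompact_sphere (0 : E) 1).inter_left isClosed_closure).exists_isMaxOn
    ⟨_, (hnormalize hy₀).2⟩ (hcont.mono hsub)
  refine ⟨p, hsub hp, fun y hy => ?_⟩
  obtain ⟨hpos, hmem⟩ := hnormalize hy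
  exact (hq _ hpos y hy).symm.trans_le (hmax hmem)

end Homogeneous

section OnePhase

open Filter Topology InnerProductSpace Laplacian Gradient

/-- A `1`-homogeneous classical solution `u` of the one-phase free boundary problem, regular away
from the vertex `0` of the cone `{u > 0}`. The boundary regularity is recorded by a function `U`
that extends `u` in a `C³` way across every point of the closed cone other than `0`; the
derivatives of `u` on the free boundary are those of `U`. -/
structure HomogeneousOnePhase {E : Type*} [NormedAddCommGroup E] [InnerProductSpace ℝ E]
    [FiniteDimensional ℝ E] (u U : E → ℝ) : Prop where
  nonneg : ∀ x, 0 ≤ u x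
  continuous : Continuous u
  apply_smul : ∀ t : ℝ, 0 < t → ∀ x, u (t • x) = t * u x
  harmonicAt : ∀ x, 0 < u x → HarmonicAt u x
  contDiffAt : ∀ x ∈ closure {x | 0 < u x} \ {0}, ContDiffAt ℝ 3 U x
  eqOn : EqOn U u (closure {x | 0 < u x})
  norm_gradient : ∀ x ∈ frontier {x | 0 < u x} \ {0}, ‖∇ U x‖ = 1

namespace HomogeneousOnePhase

variable {E : Type*} [NormedAddCommGroup E] [InnerProductSpace ℝ E] [FiniteDimensional ℝ E]
  {u U : E → ℝ}

section Basic

lemma isOpen_pos (S : HomogeneousOnePhase u U) : IsOpen {x | 0 < u x} :=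
  isOpen_lt continuous_const S.continuous

lemma ne_zero (S : HomogeneousOnePhase u U) {y : E} (hy : 0 < u y) : y ≠ 0 := by
  rintro rfl
  exact hy.ne' (apply_zero_of_apply_smul S.apply_smul)

lemma mem_of_pos (S : HomogeneousOnePhase u U) {y : E} (hy : 0 < u y) :
    y ∈ closure {x | 0 < u x} \ {0} :=
  ⟨subset_closure hy, S.ne_zero hy⟩

lemma pos_smul (S : HomogeneousOnePhase u U) {y : E} (hy : 0 < u y) {t : ℝ} (ht : 0 < t) :
    0 < u (t • y) := by
  rw [S.apply_smul t ht]
  exact mul_pos ht hy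

lemma mem_frontier_of_not_pos (S : HomogeneousOnePhase u U) {y : E}
    (hy : y ∈ closure {x | 0 < u x} \ {0}) (hpos : ¬ 0 < u y) :
    y ∈ frontier {x | 0 < u x} \ {0} := by
  rw [S.isOpen_pos.frontier_eq]
  exact ⟨⟨hy.1, hpos⟩, hy.2⟩

lemma apply_of_mem_frontier (S : HomogeneousOnePhase u U) {x : E}
    (hx : x ∈ frontier {x | 0 < u x}) : u x = 0 := by
  rw [S.isOpen_pos.frontier_eq] at hx
  exact le_antisymm (not_lt.1 hx.2) (S.nonneg x)

lemma contDiffAt_of_mem_frontier (S : HomogeneousOnePhase u U) {x : E}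
    (hx : x ∈ frontier {x | 0 < u x} \ {0}) : ContDiffAt ℝ 3 U x :=
  S.contDiffAt x ⟨hx.1.1, hx.2⟩

lemma eventuallyEq (S : HomogeneousOnePhase u U) {y : E} (hy : 0 < u y) : U =ᶠ[𝓝 y] u := by
  filter_upwards [S.isOpen_pos.mem_nhds hy] with z hz using S.eqOn (subset_closure hz)

lemma harmonicAt_extension (S : HomogeneousOnePhase u U) {y : E} (hy : 0 < u y) :
    HarmonicAt U y :=
  (harmonicAt_congr_nhds (S.eventuallyEq hy)).2 (S.harmonicAt y hy)

lemma continuousAt_gradient (S : HomogeneousOnePhase u U) {y : E}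
    (hy : y ∈ closure {x | 0 < u x} \ {0}) : ContinuousAt (∇ U) y :=
  (contDiffAt_gradient (m := 2) (S.contDiffAt y hy) (by norm_num)).continuousAt

lemma harmonicAt_inner_gradient (S : HomogeneousOnePhase u U) {y : E} (hy : 0 < u y) (v : E) :
    HarmonicAt (fun z => ⟪∇ U z, v⟫) y := by
  simp only [inner_gradient_left]
  exact harmonicAt_fderiv_apply (S.contDiffAt y (S.mem_of_pos hy)) (S.harmonicAt_extension hy) v

lemma inner_gradient_self (S : HomogeneousOnePhase u U) {y : E} (hy : 0 < u y) :
    ⟪∇ U y, y⟫ = u y := by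
  have hU : DifferentiableAt ℝ u y := (S.harmonicAt y hy).1.differentiableAt (by simp)
  have hray : HasDerivAt (fun t : ℝ => t • y) y 1 := by
    simpa using (hasDerivAt_id (1 : ℝ)).smul_const y
  have hcomp : HasDerivAt (fun t : ℝ => u (t • y)) (fderiv ℝ u y y) 1 :=
    HasFDerivAt.comp_hasDerivAt_of_eq (1 : ℝ) hU.hasFDerivAt hray (by simp)
  have hmul : HasDerivAt (fun t : ℝ => t * u y) (u y) 1 := by
    simpa using (hasDerivAt_id (1 : ℝ)).mul_const (u y)
  rw [(S.eventuallyEq hy).gradient_eq, inner_gradient_left]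
  refine hcomp.unique (hmul.congr_of_eventuallyEq ?_)
  filter_upwards [lt_mem_nhds one_pos] with t ht using S.apply_smul t ht y

lemma gradient_smul (S : HomogeneousOnePhase u U) {y : E} (hy : 0 < u y) {t : ℝ} (ht : 0 < t) :
    ∇ U (t • y) = ∇ U y := by
  have hscale : t • fderiv ℝ u (t • y) = t • fderiv ℝ u y := by
    rw [← fderiv_comp_smul, funext (S.apply_smul t ht),
      fderiv_const_mul ((S.harmonicAt y hy).1.differentiableAt (by simp))]
  rw [(S.eventuallyEq hy).gradient_eq, (S.eventuallyEq (S.pos_smul hy ht)).gradient_eq, gradient,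
    gradient, smul_right_injective _ ht.ne' hscale]

lemma one_lt_finrank (S : HomogeneousOnePhase u U) {x : E}
    (hx : x ∈ frontier {x | 0 < u x} \ {0}) : 1 < Module.finrank ℝ E := by
  by_contra! hle
  have : Nontrivial E := nontrivial_of_ne x 0 hx.2
  have hone : Module.finrank ℝ E = 1 := le_antisymm hle Module.finrank_pos
  obtain ⟨y, hyx, hy⟩ := mem_closure_iff.1 hx.1.1 {y | 0 < ⟪y, x⟫}
    (isOpen_lt continuous_const (by fun_prop)) (real_inner_self_pos.2 hx.2)
  obtain ⟨t, rfl⟩ := (finrank_eq_one_iff_of_nonzero' x hx.2).1 hone y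
  have ht : 0 < t := by
    refine pos_of_mul_pos_left (b := ⟪x, x⟫) ?_ real_inner_self_nonneg
    rwa [← real_inner_smul_left]
  have hzero : u (t • x) = 0 := by rw [S.apply_smul t ht, S.apply_of_mem_frontier hx.1, mul_zero]
  exact hzero.not_gt hy

lemma subset_pos_of_isPreconnected (S : HomogeneousOnePhase u U) {C : Set E}
    (hC : IsPreconnected C) (hmeet : ∃ y ∈ C, 0 < u y)
    (hU : ∀ z ∈ C, z ∈ closure {x | 0 < u x} → 0 < U z) : C ⊆ {x | 0 < u x} := by
  refine hC.subset_of_closure_inter_subset S.isOpen_pos hmeet fun z hz => ?_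
  have := hU z hz.2 hz.1
  rwa [S.eqOn hz.1] at this

end Basic

section LinearOnHalfSpace

variable {e : E}

theorem eqOn_inner_of_isMaxOn_norm_gradient (S : HomogeneousOnePhase u U) {p : E} (hp : 0 < u p)
    (hmax : IsMaxOn (fun y => ‖∇ U y‖) {y | 0 < u y} p) :
    EqOn u (fun y => ⟪y, ∇ U p⟫) {y | 0 < ⟪y, ∇ U p⟫} := by
  have hle {z : E} (hz : 0 < u z) : ‖∇ U z‖ ≤ ‖∇ U p‖ := hmax hz
  refine eqOn_setOf_pos_of_laplacian_nonneg (f := fun y => ⟪∇ U y, ∇ U p⟫) (c := ‖∇ U p‖ ^ 2)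
    S.continuous (by fun_prop) (isPreconnected_setOf_inner_pos _)
    (fun z hz _ => (S.harmonicAt_inner_gradient hz _).1)
    (fun z hz _ => (S.harmonicAt_inner_gradient hz _).2.self_of_nhds.ge) (fun z hz _ => ?_)
    (fun z hz _ hzp => ?_) hp ?_ (real_inner_self_eq_norm_sq _)
  · calc ⟪∇ U z, ∇ U p⟫ ≤ ‖∇ U z‖ * ‖∇ U p‖ := real_inner_le_norm _ _
      _ ≤ ‖∇ U p‖ * ‖∇ U p‖ := by gcongr; exact hle hz
      _ = ‖∇ U p‖ ^ 2 := (sq _).symm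
  · have hgrad : ∇ U z = ∇ U p := eq_of_norm_le_re_inner_eq_norm_sq (𝕜 := ℝ) (hle hz) hzp
    rw [← S.inner_gradient_self hz, hgrad, real_inner_comm]
  · rwa [real_inner_comm, S.inner_gradient_self hp]

lemma mem_closure_of_eqOn_inner (S : HomogeneousOnePhase u U)
    (hlin : EqOn u (fun y => ⟪y, e⟫) {y | 0 < ⟪y, e⟫}) (he : e ≠ 0) {y : E} (hy : 0 ≤ ⟪y, e⟫) :
    y ∈ closure {x | 0 < u x} ∧ u y = ⟪y, e⟫ := by
  have hmem : y ∈ closure {x | 0 < ⟪x, e⟫} := by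
    refine mem_closure_of_tendsto ((tendsto_add_smul y e).mono_left
      (nhdsWithin_le_nhds (s := Ioi 0))) ?_
    filter_upwards [self_mem_nhdsWithin] with t (ht : 0 < t)
    have := real_inner_self_pos.2 he
    simp only [inner_add_left, real_inner_smul_left]
    positivity
  refine ⟨closure_mono (fun z hz => ?_) hmem, closure_minimal hlin
    (isClosed_eq S.continuous (by fun_prop)) hmem⟩
  exact lt_of_lt_of_eq hz (hlin hz).symm

lemma mem_frontier_of_eqOn_inner (S : HomogeneousOnePhase u U)
    (hlin : EqOn u (fun y => ⟪y, e⟫) {y | 0 < ⟪y, e⟫}) (he : e ≠ 0) {z : E} (hz₀ : z ≠ 0)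
    (hz : ⟪z, e⟫ = 0) : z ∈ frontier {x | 0 < u x} \ {0} := by
  obtain ⟨hmem, hu⟩ := S.mem_closure_of_eqOn_inner hlin he hz.ge
  exact S.mem_frontier_of_not_pos ⟨hmem, hz₀⟩ (by simp [hu, hz])

lemma gradient_eq_of_eqOn_inner (S : HomogeneousOnePhase u U)
    (hlin : EqOn u (fun y => ⟪y, e⟫) {y | 0 < ⟪y, e⟫}) (he : e ≠ 0) {z : E} (hz₀ : z ≠ 0)
    (hz : ⟪z, e⟫ = 0) : ∇ U z = e := by
  have hcont := S.continuousAt_gradient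
    ⟨(S.mem_closure_of_eqOn_inner hlin he hz.ge).1, hz₀⟩
  have hlim : Tendsto (fun t : ℝ => ∇ U (z + t • e)) (𝓝[>] 0) (𝓝 (∇ U z)) :=
    (hcont.tendsto.comp (tendsto_add_smul z e)).mono_left nhdsWithin_le_nhds
  refine tendsto_nhds_unique hlim (tendsto_const_nhds.congr' ?_)
  filter_upwards [self_mem_nhdsWithin] with t (ht : 0 < t)
  have hpos : 0 < ⟪z + t • e, e⟫ := by
    have := real_inner_self_pos.2 he
    rw [inner_add_left, real_inner_smul_left, hz, zero_add]
    positivity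
  have hopen : IsOpen {y | 0 < ⟪y, e⟫} := isOpen_lt continuous_const (by fun_prop)
  have hnhds : U =ᶠ[𝓝 (z + t • e)] fun y => ⟪y, e⟫ := by
    filter_upwards [hopen.mem_nhds hpos] with y hy
    obtain ⟨hmem, hu⟩ := S.mem_closure_of_eqOn_inner hlin he (le_of_lt hy)
    rw [S.eqOn hmem, hu]
  have hgrad : HasGradientAt (fun y => ⟪y, e⟫) e (z + t • e) := by
    simp only [hasGradientAt_iff_hasFDerivAt, real_inner_comm]
    exact (innerSL ℝ e).hasFDerivAt
  exact (hnhds.gradient_eq.trans hgrad.gradient).symm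

lemma norm_eq_one_of_eqOn_inner (S : HomogeneousOnePhase u U)
    (hlin : EqOn u (fun y => ⟪y, e⟫) {y | 0 < ⟪y, e⟫}) (he : e ≠ 0)
    (hE : 1 < Module.finrank ℝ E) : ‖e‖ = 1 := by
  obtain ⟨z, hz₀, hz⟩ := exists_ne_zero_inner_eq_zero hE e
  rw [← S.gradient_eq_of_eqOn_inner hlin he hz₀ hz]
  exact S.norm_gradient z (S.mem_frontier_of_eqOn_inner hlin he hz₀ hz)

lemma eventually_not_pos_of_inner_neg (S : HomogeneousOnePhase u U)
    (hlin : EqOn u (fun y => ⟪y, e⟫) {y | 0 < ⟪y, e⟫}) (he : ‖e‖ = 1) {z : E} (hz₀ : z ≠ 0)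
    (hz : ⟪z, e⟫ = 0) : ∀ᶠ y in 𝓝 z, ⟪y, e⟫ < 0 → ¬ 0 < u y := by
  have he₀ : e ≠ 0 := ne_zero_of_norm_ne_zero (by simp [he])
  have hstrict : HasStrictFDerivAt U (fderiv ℝ U z) z :=
    (S.contDiffAt_of_mem_frontier (S.mem_frontier_of_eqOn_inner hlin he₀ hz₀ hz)).hasStrictFDerivAt
      (by simp)
  have hslope : 0 < fderiv ℝ U z e := by
    rw [← inner_gradient_left, S.gradient_eq_of_eqOn_inner hlin he₀ hz₀ hz]
    exact real_inner_self_pos.2 he₀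
  have hproj : Tendsto (fun y => (y - ⟪y, e⟫ • e, y)) (𝓝 z) (𝓝 (z, z)) :=
    Continuous.tendsto' (by fun_prop) _ _ (by simp [hz])
  filter_upwards [hproj.eventually (eventually_lt_of_fderiv_pos hstrict hslope)] with y hy hye hyu
  have hinner : ⟪y - ⟪y, e⟫ • e, e⟫ = 0 := by
    simp [inner_sub_left, real_inner_smul_left, he]
  obtain ⟨hmem, hzero⟩ := S.mem_closure_of_eqOn_inner hlin he₀ hinner.ge
  have hlt : U y < U (y - ⟪y, e⟫ • e) := hy (-⟪y, e⟫) (neg_pos.2 hye) (by simp)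
  rw [S.eqOn hmem, S.eqOn (subset_closure hyu), hzero, hinner] at hlt
  exact hlt.not_gt hyu

lemma inner_neg_of_mem_closure (S : HomogeneousOnePhase u U)
    (hlin : EqOn u (fun y => ⟪y, e⟫) {y | 0 < ⟪y, e⟫}) (he : ‖e‖ = 1) {y : E}
    (hy : y ∈ closure {x | 0 < u x ∧ ⟪x, e⟫ < 0} \ {0}) : ⟪y, e⟫ < 0 := by
  have hle : ⟪y, e⟫ ≤ 0 :=
    closure_minimal (t := {y | ⟪y, e⟫ ≤ 0}) (fun w hw => le_of_lt hw.2)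
      (isClosed_le (by fun_prop) continuous_const) hy.1
  refine hle.lt_of_ne fun hzero => ?_
  obtain ⟨w, ⟨hw, hwe⟩, hnot⟩ := ((mem_closure_iff_frequently.1 hy.1).and_eventually
    (S.eventually_not_pos_of_inner_neg hlin he hy.2 hzero)).exists
  exact hnot hwe hw

theorem exists_eqOn_inner_smul (S : HomogeneousOnePhase u U)
    (hlin : EqOn u (fun y => ⟪y, e⟫) {y | 0 < ⟪y, e⟫}) (he : ‖e‖ = 1)
    (hD : {x | 0 < u x ∧ ⟪x, e⟫ < 0}.Nonempty) :
    ∃ m : ℝ, 0 < m ∧ EqOn u (fun y => ⟪y, -(m • e)⟫) {y | 0 < ⟪y, -(m • e)⟫} := by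
  have hneg {y : E} (hy : y ∈ closure {x | 0 < u x ∧ ⟪x, e⟫ < 0} \ {0}) : 0 < -⟪y, e⟫ :=
    neg_pos.2 (S.inner_neg_of_mem_closure hlin he hy)
  obtain ⟨p, hp, hmax⟩ := exists_isMaxOn_of_cone (q := fun y => u y / -⟪y, e⟫) hD
    (fun h => S.ne_zero h.1 rfl)
    (fun t ht y hy => ⟨S.pos_smul hy.1 ht, by
      rw [real_inner_smul_left]; exact mul_neg_of_pos_of_neg ht hy.2⟩)
    (fun t ht y _ => by
      rw [S.apply_smul t ht, real_inner_smul_left, ← mul_neg, mul_div_mul_left _ _ ht.ne'])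
    (S.continuous.continuousOn.div (by fun_prop) fun y hy => (hneg hy).ne')
  set m := u p / -⟪p, e⟫
  have hle {y : E} (hy : 0 < u y) (hye : ⟪y, e⟫ < 0) : u y ≤ m * -⟪y, e⟫ :=
    (div_le_iff₀ (neg_pos.2 hye)).1 (hmax ⟨hy, hye⟩)
  have hm : 0 < m := by
    obtain ⟨y, hy, hye⟩ := hD
    exact pos_of_mul_pos_left (hy.trans_le (hle hy hye)) (neg_pos.2 hye).le
  have hpu : u p = m * -⟪p, e⟫ := (div_mul_cancel₀ _ (hneg hp).ne').symm
  have hinner (y : E) : ⟪y, -(m • e)⟫ = m * -⟪y, e⟫ := by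
    rw [inner_neg_right, real_inner_smul_right, mul_neg]
  have hside {y : E} (hy : 0 < ⟪y, -(m • e)⟫) : ⟪y, e⟫ < 0 :=
    neg_pos.1 (pos_of_mul_pos_right (hinner y ▸ hy) hm.le)
  have hharm {z : E} (hz : 0 < u z) : HarmonicAt (u - fun y => ⟪y, -(m • e)⟫) z :=
    (S.harmonicAt z hz).sub (harmonicAt_inner _ z)
  refine ⟨m, hm, eqOn_setOf_pos_of_laplacian_nonneg (f := u - fun y => ⟪y, -(m • e)⟫) (c := 0)
    (p := p) S.continuous (by fun_prop) (isPreconnected_setOf_inner_pos _)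
    (fun z hz _ => (hharm hz).1) (fun z hz _ => (hharm hz).2.self_of_nhds.ge)
    (fun z hz hze => sub_nonpos.2 ((hle hz (hside hze)).trans_eq (hinner z).symm))
    (fun z _ _ => sub_eq_zero.1) ?_ ?_ ?_⟩
  · exact hpu ▸ mul_pos hm (hneg hp)
  · exact hinner p ▸ mul_pos hm (hneg hp)
  · exact sub_eq_zero.2 (hpu.trans (hinner p).symm)

theorem eq_max_inner_of_eqOn_inner (S : HomogeneousOnePhase u U)
    (hlin : EqOn u (fun y => ⟪y, e⟫) {y | 0 < ⟪y, e⟫}) (he : e ≠ 0)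
    (hE : 1 < Module.finrank ℝ E) (y : E) : u y = max ⟪y, e⟫ 0 := by
  rcases le_or_gt 0 ⟪y, e⟫ with hy | hy
  · rw [(S.mem_closure_of_eqOn_inner hlin he hy).2, max_eq_left hy]
  rw [max_eq_right hy.le]
  refine le_antisymm (not_lt.1 fun hpos => ?_) (S.nonneg y)
  obtain ⟨m, hm, hlin'⟩ := S.exists_eqOn_inner_smul hlin
    (S.norm_eq_one_of_eqOn_inner hlin he hE) ⟨y, hpos, hy⟩
  obtain ⟨z, hz₀, hz⟩ := exists_ne_zero_inner_eq_zero hE e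
  have hgrad := S.gradient_eq_of_eqOn_inner hlin he hz₀ hz
  have hgrad' := S.gradient_eq_of_eqOn_inner hlin'
    (neg_ne_zero.2 (smul_ne_zero hm.ne' he)) hz₀ (by simp [real_inner_smul_right, hz])
  have hsum : (1 + m) • e = 0 := by
    rw [add_smul, one_smul, ← eq_neg_iff_add_eq_zero]
    exact hgrad.symm.trans hgrad'
  exact he ((smul_eq_zero.1 hsum).resolve_left (by positivity))

end LinearOnHalfSpace

section GradientBound

theorem eq_max_inner_of_isMaxOn_norm_gradient (S : HomogeneousOnePhase u U)
    (hE : 1 < Module.finrank ℝ E) {p : E} (hp : 0 < u p)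
    (hmax : IsMaxOn (fun y => ‖∇ U y‖) {y | 0 < u y} p) :
    ∃ ν : E, ‖ν‖ = 1 ∧ ∀ x, u x = max ⟪x, ν⟫ 0 := by
  have hlin := S.eqOn_inner_of_isMaxOn_norm_gradient hp hmax
  have hgrad : ∇ U p ≠ 0 := fun h => hp.ne' (by rw [← S.inner_gradient_self hp, h, inner_zero_left])
  exact ⟨∇ U p, S.norm_eq_one_of_eqOn_inner hlin hgrad hE,
    S.eq_max_inner_of_eqOn_inner hlin hgrad hE⟩

theorem norm_gradient_lt_one (S : HomogeneousOnePhase u U) (hE : 1 < Module.finrank ℝ E)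
    (hnl : ¬ ∃ ν : E, ‖ν‖ = 1 ∧ ∀ x, u x = max ⟪x, ν⟫ 0) {y : E} (hy : 0 < u y) :
    ‖∇ U y‖ < 1 := by
  have hno {q : E} (hq : 0 < u q) : ¬ IsMaxOn (fun y => ‖∇ U y‖) {y | 0 < u y} q := fun hmax =>
    hnl (S.eq_max_inner_of_isMaxOn_norm_gradient hE hq hmax)
  obtain ⟨p, hp, hmax⟩ := exists_isMaxOn_of_cone (D := {z | 0 < u z}) (q := fun z => ‖∇ U z‖)
    ⟨y, hy⟩ (fun h => S.ne_zero h rfl) (fun t ht z hz => S.pos_smul hz ht)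
    (fun t ht z hz => by rw [S.gradient_smul hz ht])
    (fun z hz => (S.continuousAt_gradient hz).norm.continuousWithinAt)
  have hone : ‖∇ U p‖ = 1 :=
    S.norm_gradient p (S.mem_frontier_of_not_pos hp fun hpos => hno hpos hmax)
  have hle : ∀ z ∈ {z | 0 < u z}, ‖∇ U z‖ ≤ 1 := fun z hz => (hmax hz).trans_eq hone
  exact (hle y hy).lt_of_ne fun h => hno hy fun z hz => (hle z hz).trans_eq h.symm

end GradientBound

section FreeBoundary

variable {x : E}

lemma eventually_pos_add_smul (S : HomogeneousOnePhase u U)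
    (hx : x ∈ frontier {x | 0 < u x} \ {0}) :
    ∀ᶠ p : E × ℝ in 𝓝 (x, 0), 0 < u p.1 → 0 ≤ p.2 → 0 < u (p.1 + p.2 • ∇ U x) := by
  have hstrict : HasStrictFDerivAt U (fderiv ℝ U x) x :=
    (S.contDiffAt_of_mem_frontier hx).hasStrictFDerivAt (by simp)
  have hslope : 0 < fderiv ℝ U x (∇ U x) := by
    rw [← inner_gradient_left, real_inner_self_eq_norm_sq, S.norm_gradient x hx]
    norm_num
  have hpair : Tendsto (fun p : E × ℝ => (p.1 + p.2 • ∇ U x, p.1)) (𝓝 (x, 0)) (𝓝 (x, x)) :=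
    Continuous.tendsto' (by fun_prop) _ _ (by simp)
  obtain ⟨r, hr, hball⟩ := Metric.eventually_nhds_iff_ball.1
    (hpair.eventually (eventually_lt_of_fderiv_pos hstrict hslope))
  filter_upwards [ball_mem_nhds _ hr] with ⟨y, t⟩ hyt hy ht
  have hsub : (fun s : ℝ => y + s • ∇ U x) '' Icc 0 t ⊆ {z | 0 < u z} := by
    refine S.subset_pos_of_isPreconnected (isPreconnected_Icc.image _ (by fun_prop))
      ⟨y, ⟨0, by simpa using ht, by simp⟩, hy⟩ ?_
    rintro _ ⟨s, hs, rfl⟩ -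
    rcases hs.1.eq_or_lt with rfl | hs₀
    · simpa [S.eqOn (subset_closure hy)] using hy
    have hys : (y, s) ∈ ball (x, (0 : ℝ)) r := by
      rw [← ball_prod_same] at hyt ⊢
      refine ⟨hyt.1, ?_⟩
      have : |t| < r := by simpa using hyt.2
      simpa using (abs_le_abs_of_nonneg hs.1 hs.2).trans_lt this
    have hlt : U y < U (y + s • ∇ U x) := hball _ hys s hs₀ (by simp)
    rw [S.eqOn (subset_closure hy)] at hlt
    exact hy.trans hlt
  exact hsub ⟨t, ⟨ht, le_rfl⟩, rfl⟩

theorem eventually_ball_subset_pos (S : HomogeneousOnePhase u U)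
    (hx : x ∈ frontier {x | 0 < u x} \ {0}) :
    ∀ᶠ ρ : ℝ in 𝓝[>] 0, ball (x + ρ • ∇ U x) ρ ⊆ {y | 0 < u y} := by
  have hzero : U x = 0 := (S.eqOn hx.1.1).trans (S.apply_of_mem_frontier hx.1)
  have htangent := eventually_pos_on_tangent_ball
    ((S.contDiffAt_of_mem_frontier hx).of_le (by norm_num)) hzero
  rw [S.norm_gradient x hx] at htangent
  obtain ⟨r, hr, hball⟩ := Metric.eventually_nhds_iff_ball.1 (S.eventually_pos_add_smul hx)
  filter_upwards [htangent, Ioo_mem_nhdsGT hr] with ρ hpos ⟨hρ, hρr⟩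
  rw [mul_one] at hpos
  obtain ⟨y, hy, hyx⟩ := Metric.mem_closure_iff.1 hx.1.1 ρ hρ
  rw [dist_comm] at hyx
  have hmem : (y, ρ) ∈ ball (x, (0 : ℝ)) r := by
    rw [← ball_prod_same]
    exact ⟨hyx.trans hρr, by simpa [abs_of_pos hρ] using hρr⟩
  exact S.subset_pos_of_isPreconnected (convex_ball _ _).isPreconnected
    ⟨y + ρ • ∇ U x, by simpa using hyx, hball _ hmem hy hρ.le⟩ fun z hz _ => hpos z hz

lemma inner_gradient_lt_self (S : HomogeneousOnePhase u U)
    (hnl : ¬ ∃ ν : E, ‖ν‖ = 1 ∧ ∀ x, u x = max ⟪x, ν⟫ 0)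
    (hx : x ∈ frontier {x | 0 < u x} \ {0}) {y : E} (hy : 0 < u y) :
    ⟪∇ U y, ∇ U x⟫ < ⟪∇ U x, ∇ U x⟫ := by
  have hone := S.norm_gradient x hx
  calc ⟪∇ U y, ∇ U x⟫ ≤ ‖∇ U y‖ := by simpa [hone] using real_inner_le_norm (∇ U y) (∇ U x)
    _ < 1 := S.norm_gradient_lt_one (S.one_lt_finrank hx) hnl hy
    _ = ⟪∇ U x, ∇ U x⟫ := by simp [hone]

theorem fderiv_inner_gradient_neg_pos (S : HomogeneousOnePhase u U)
    (hnl : ¬ ∃ ν : E, ‖ν‖ = 1 ∧ ∀ x, u x = max ⟪x, ν⟫ 0)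
    (hx : x ∈ frontier {x | 0 < u x} \ {0}) :
    0 < fderiv ℝ (fun y => ⟪∇ U y, ∇ U x⟫) x (-∇ U x) := by
  have hsmooth := S.contDiffAt_of_mem_frontier hx
  have hone := S.norm_gradient x hx
  have hclosedBall := eventually_closedBall_add_smul_subset (hsmooth.eventually (by simp)) (∇ U x)
  rw [hone] at hclosedBall
  obtain ⟨ρ, ⟨hsub, hpos⟩, hρ : 0 < ρ⟩ :=
    ((hclosedBall.and (S.eventually_ball_subset_pos hx)).and self_mem_nhdsWithin).exists
  rw [mul_one] at hsub
  set q := x + ρ • ∇ U x with hq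
  have hnorm : ‖x - q‖ = ρ := by simp [hq, norm_smul, hone, hρ.le]
  rw [← hnorm] at hsub hpos
  have hdiff : ∀ z ∈ closedBall q ‖x - q‖, ContDiffAt ℝ 2 (fun y => ⟪∇ U y, ∇ U x⟫) z :=
    fun z hz => (contDiffAt_gradient (k := 3) (hsub hz) (by norm_num)).inner ℝ contDiffAt_const
  have hhopf := fderiv_pos_of_laplacian_nonneg_of_lt
    (fun z hz => hdiff z (ball_subset_closedBall hz))
    (fun z hz => (S.harmonicAt_inner_gradient (hpos hz) _).2.self_of_nhds.ge)
    (fun z hz => (hdiff z hz).continuousAt.continuousWithinAt)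
    ((hdiff x (by simp [dist_eq_norm])).differentiableAt (by simp))
    (fun h => hρ.ne' (by simp [← hnorm, ← h]))
    (fun z hz => S.inner_gradient_lt_self hnl hx (hpos hz))
  rw [hq, sub_add_cancel_left, ← smul_neg, map_smul, smul_eq_mul] at hhopf
  exact pos_of_mul_pos_right hhopf hρ.le

end FreeBoundary

end HomogeneousOnePhase

end OnePhase

section EuclideanSpace

open InnerProductSpace Laplacian

variable {n : ℕ} {u U : EuclideanSpace ℝ (Fin n) → ℝ}

lemma lap_eq_laplacian {f : EuclideanSpace ℝ (Fin n) → ℝ} {x : EuclideanSpace ℝ (Fin n)}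
    (hf : ContDiffAt ℝ 2 f x) : lap f x = Δ f x := by
  have hf' : DifferentiableAt ℝ (fderiv ℝ f) x :=
    (hf.fderiv_right (m := 1) (by norm_num)).differentiableAt (by simp)
  rw [lap, laplacian_eq_sum_fderiv_fderiv (EuclideanSpace.basisFun (Fin n) ℝ)]
  refine Finset.sum_congr rfl fun i _ => ?_
  rw [(hf'.hasFDerivAt.clm_apply (hasFDerivAt_const (EuclideanSpace.single i 1) x)).fderiv]
  simp

lemma homogeneousOnePhase_of_lap_eq_zero {W : Set (EuclideanSpace ℝ (Fin n))}
    (hnonneg : ∀ x, 0 ≤ u x) (hcont : Continuous u)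
    (hhom : ∀ t : ℝ, 0 < t → ∀ x, u (t • x) = t * u x) (hlap : ∀ x ∈ {x | 0 < u x}, lap u x = 0)
    (hW : IsOpen W) (hsub : closure {x | 0 < u x} \ {0} ⊆ W)
    (hU : ContDiffOn ℝ (⊤ : ℕ∞) U W) (heq : EqOn U u (closure {x | 0 < u x}))
    (hgrad : ∀ x ∈ freeBoundary u, ‖gradient U x‖ = 1) : HomogeneousOnePhase u U := by
  have hsmooth : ∀ x ∈ closure {x | 0 < u x} \ {0}, ContDiffAt ℝ 3 U x := fun x hx =>
    ((hU x (hsub hx)).contDiffAt (hW.mem_nhds (hsub hx))).of_le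
      (WithTop.coe_le_coe.2 (le_top (a := (3 : ℕ∞))))
  have hopen : IsOpen {x | 0 < u x} := isOpen_lt continuous_const hcont
  have hC2 : ∀ x ∈ {x | 0 < u x}, ContDiffAt ℝ 2 u x := fun x hx =>
    ((hsmooth x ⟨subset_closure hx, fun h => hx.ne' (h ▸ apply_zero_of_apply_smul hhom)⟩).of_le
      (by norm_num)).congr_of_eventuallyEq
      ((heq.mono subset_closure).eventuallyEq_of_mem (hopen.mem_nhds hx)).symm
  refine ⟨hnonneg, hcont, hhom, fun x hx => ⟨hC2 x hx, ?_⟩, hsmooth, heq, hgrad⟩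
  filter_upwards [hopen.mem_nhds hx] with y hy
  rw [← lap_eq_laplacian (hC2 y hy), hlap y hy, Pi.zero_apply]

end EuclideanSpace

section MeanCurvature

open Gradient

theorem mean_curvature_positive_of_nonlinear_general {E : Type*} [NormedAddCommGroup E]
    [InnerProductSpace ℝ E] [FiniteDimensional ℝ E] {u U : E → ℝ} (S : HomogeneousOnePhase u U)
    (hnl : ¬ ∃ ν : E, ‖ν‖ = 1 ∧ ∀ x, u x = max ⟪x, ν⟫ 0) {x : E}
    (hx : x ∈ frontier {x | 0 < u x} \ {0}) :
    0 < deriv (fun t : ℝ => ‖∇ U (x + t • -∇ U x)‖ ^ 2 / 2) 0 ∧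
      deriv (fun t : ℝ => ‖∇ U (x + t • -∇ U x)‖ ^ 2 / 2) 0 =
        -fderiv ℝ (fun y => ⟪∇ U y, -∇ U x⟫) x (-∇ U x) ∧
      0 < -fderiv ℝ (fun y => ⟪∇ U y, -∇ U x⟫) x (-∇ U x) := by
  have hdiff : DifferentiableAt ℝ (∇ U) x :=
    (contDiffAt_gradient (m := 2) (S.contDiffAt_of_mem_frontier hx)
      (by norm_num)).differentiableAt (by simp)
  have hcurv : -fderiv ℝ (fun y => ⟪∇ U y, -∇ U x⟫) x (-∇ U x) =
      fderiv ℝ (fun y => ⟪∇ U y, ∇ U x⟫) x (-∇ U x) := by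
    simp only [inner_neg_right, fderiv_fun_neg, neg_apply, neg_neg]
  have hpos := S.fderiv_inner_gradient_neg_pos hnl hx
  rw [deriv_norm_sq_comp_add_smul hdiff, hcurv]
  exact ⟨hpos, rfl, hpos⟩

end MeanCurvature

/-- **Positivity of the mean curvature for nonlinear homogeneous minimizers**
(from the proof of Theorem 1.2, following [CJK04, JS15]).  If `u` is a `1`-homogeneous
`Γ`-symmetric minimizer against `Γ`-symmetric competitors, harmonic in `{u>0}`, with
`Σ = ∂{u>0} \ {0}` a smooth embedded hypersurface (encoded via a smooth extension `Uext`),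
`|∇u| = 1` on `Σ`, and `u` is not a linear solution, then everywhere on `Σ`
`0 < ∂_ν(|∇u|²/2) = -∂²u/∂ν² = H`. -/
theorem mean_curvature_positive_of_nonlinear {n : ℕ} (hn : 3 ≤ n)
    (Γ : Subgroup (EuclideanSpace ℝ (Fin n) ≃ₗᵢ[ℝ] EuclideanSpace ℝ (Fin n)))
    (hfin : Finite Γ)
    (hfree : ∀ g ∈ Γ, (∃ x : EuclideanSpace ℝ (Fin n), x ≠ 0 ∧ g x = x) → g = 1)
    (u : EuclideanSpace ℝ (Fin n) → ℝ)
    (hmin : IsSymMinimizer Γ u)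
    (huHom : ∀ t : ℝ, 0 < t → ∀ x, u (t • x) = t * u x)
    (huHarm : ∀ x ∈ {x | 0 < u x}, lap u x = 0)
    -- smooth extension of `u` across `Σ`
    (Uext : EuclideanSpace ℝ (Fin n) → ℝ) (W : Set (EuclideanSpace ℝ (Fin n)))
    (hW : IsOpen W) (hWsup : closure {x | 0 < u x} \ {0} ⊆ W)
    (hUsm : ContDiffOn ℝ (⊤ : ℕ∞) Uext W)
    (hUeq : ∀ x ∈ closure {x | 0 < u x}, Uext x = u x)
    (hgrad1 : ∀ x ∈ freeBoundary u, ‖gradient Uext x‖ = 1)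
    (hsurf : ∀ x ∈ freeBoundary u, ∃ ε > 0,
      freeBoundary u ∩ ball x ε = {y ∈ ball x ε | Uext y = 0})
    -- `u` is not a linear solution
    (hNotLin : ¬ ∃ ν : EuclideanSpace ℝ (Fin n), ‖ν‖ = 1 ∧ ∀ x, u x = max ⟪x, ν⟫ 0) :
    ∀ x ∈ freeBoundary u,
      0 < deriv (fun t : ℝ => ‖gradient Uext (x + t • nuVec Uext x)‖ ^ 2 / 2) 0 ∧
      deriv (fun t : ℝ => ‖gradient Uext (x + t • nuVec Uext x)‖ ^ 2 / 2) 0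
        = meanCurv Uext x ∧
      0 < meanCurv Uext x := by
  have S := homogeneousOnePhase_of_lap_eq_zero hmin.1 hmin.2.1.continuous huHom huHarm hW hWsup
    hUsm hUeq hgrad1
  exact fun x hx => mean_curvature_positive_of_nonlinear_general S hNotLin hx
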